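/- arXiv:1608.06375 — 7 statements merged into one kernel-verified Lean document; each statement's English description precedes it below -/
import Mathlib

section
/- For every n ∈ ℕ, the function f_n is infinitely differentiable and satisfies the harmonic-oscillator eigenvalue equation −α²·(f_n)″(x) + x²·f_n(x) = (2·n + 1)·α·f_n(x) for all x ∈ ℝ. (In particular, f_n is an eigenvector of H = α²Δ + x² with eigenvalue (2n+1)α.) -/
/-- The annihilation-type operator `(K f)(x) = α·f′(x) + x·f(x)`. -/
noncomputable def Kop (α : ℝ) (f : ℝ → ℝ) : ℝ → ℝ := fun x => α * deriv f x + x * f x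

/-- The creation-type operator `(L f)(x) = −α·f′(x) + x·f(x)`. -/
noncomputable def Lop (α : ℝ) (f : ℝ → ℝ) : ℝ → ℝ := fun x => -α * deriv f x + x * f x

/-- The harmonic oscillator `(H f)(x) = −α²·f″(x) + x²·f(x)`. -/
noncomputable def Hop (α : ℝ) (f : ℝ → ℝ) : ℝ → ℝ :=
  fun x => -α ^ 2 * deriv (deriv f) x + x ^ 2 * f x

/-- The Gaussian ground state `f₀(x) = exp(−x²/(2α))`. -/
noncomputable def hermiteF₀ (α : ℝ) : ℝ → ℝ := fun x => Real.exp (-(x ^ 2) / (2 * α))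

/-- The Hermite-type functions `f_n = L^[n] f₀`. -/
noncomputable def hermiteF (α : ℝ) (n : ℕ) : ℝ → ℝ := (Lop α)^[n] (hermiteF₀ α)

theorem Lop_step (α c : ℝ) (hα : 0 < α) (f : ℝ → ℝ) (hf : ContDiff ℝ (⊤ : ℕ∞) f)
    (h : ∀ x : ℝ, -α ^ 2 * deriv (deriv f) x + x ^ 2 * f x = c * f x) :
    ContDiff ℝ (⊤ : ℕ∞) (Lop α f) ∧
      ∀ x : ℝ, -α ^ 2 * deriv (deriv (Lop α f)) x + x ^ 2 * Lop α f x
        = (c + 2 * α) * Lop α f x := by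
  have hα' : α ≠ 0 := hα.ne'
  have hf' : ContDiff ℝ (⊤ : ℕ∞) (deriv f) := (contDiff_infty_iff_deriv.1 hf).2
  have d0 : ∀ x, HasDerivAt f (deriv f x) x := fun x =>
    ((contDiff_infty_iff_deriv.1 hf).1 x).hasDerivAt
  have d1 : ∀ x, HasDerivAt (deriv f) ((x ^ 2 - c) / α ^ 2 * f x) x := fun x => by
    have h1 := ((contDiff_infty_iff_deriv.1 hf').1 x).hasDerivAt
    refine h1.congr_deriv ?_
    rw [div_mul_eq_mul_div, eq_div_iff (pow_ne_zero 2 hα')]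
    linarith [h x]
  have g1 : deriv (Lop α f) = fun x => (c - x ^ 2 + α) / α * f x + x * deriv f x := by
    funext x
    have := ((d1 x).const_mul (-α)).add ((hasDerivAt_id x).mul (d0 x))
    refine HasDerivAt.deriv (f := Lop α f) (this.congr_deriv ?_)
    simp only [id]
    field_simp
    ring
  refine ⟨?_, fun x => ?_⟩
  · unfold Lop
    exact (contDiff_const.mul hf').add (contDiff_id.mul hf)
  · have p : HasDerivAt (fun x : ℝ => (c - x ^ 2 + α) / α) (-(2 * x) / α) x := by
      have := (((hasDerivAt_pow 2 x).const_sub c).add_const α).div_const α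
      exact this.congr_deriv (by simp)
    have g2 := ((p.mul (d0 x)).add ((hasDerivAt_id x).mul (d1 x))).deriv
    have g3 := (congrArg (fun u => deriv u x) g1).trans g2
    beta_reduce at g3
    rw [g3]
    simp only [id, Lop]
    field_simp
    ring

/-- For every `n`, the function `f_n = L^[n] f₀` is infinitely differentiable and
satisfies the harmonic-oscillator eigenvalue equation
`−α²·f_n″(x) + x²·f_n(x) = (2n+1)·α·f_n(x)` for all `x`. -/
theorem statement3 (α : ℝ) (hα : 0 < α) (n : ℕ) :
    ContDiff ℝ (⊤ : ℕ∞) (hermiteF α n) ∧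
      ∀ x : ℝ, -α ^ 2 * deriv (deriv (hermiteF α n)) x + x ^ 2 * hermiteF α n x
        = (2 * (n : ℝ) + 1) * α * hermiteF α n x := by
  have hα' : α ≠ 0 := hα.ne'
  induction n with
  | zero =>
    have d : ∀ x : ℝ, HasDerivAt (hermiteF₀ α) (-x / α * hermiteF₀ α x) x := fun x => by
      have := (((hasDerivAt_pow 2 x).neg).div_const (2 * α)).exp
      refine HasDerivAt.congr_deriv (f := hermiteF₀ α) this ?_
      simp only [hermiteF₀, Pi.neg_apply]
      field_simp
      norm_num
      ring
    refine ⟨?_, fun x => ?_⟩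
    · change ContDiff ℝ _ (fun x => Real.exp (-(x ^ 2) / (2 * α)))
      fun_prop
    · change -α ^ 2 * deriv (deriv (hermiteF₀ α)) x + x ^ 2 * hermiteF₀ α x
        = (2 * ((0 : ℕ) : ℝ) + 1) * α * hermiteF₀ α x
      have e : deriv (hermiteF₀ α) = fun x => -x / α * hermiteF₀ α x :=
        funext fun x => (d x).deriv
      have g2 := ((((hasDerivAt_id x).neg).div_const α).mul (d x)).deriv
      have g3 := (congrArg (fun u => deriv u x) e).trans g2
      beta_reduce at g3
      rw [g3]
      simp only [id, Pi.neg_apply]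
      push_cast
      field_simp
      ring
  | succ n ih =>
    have e : hermiteF α (n + 1) = Lop α (hermiteF α n) := Function.iterate_succ_apply' _ _ _
    rw [e]
    obtain ⟨a, b⟩ := Lop_step α _ hα _ ih.1 ih.2
    refine ⟨a, fun x => ?_⟩
    rw [b x]
    push_cast
    ring
end

section
/- For every infinitely differentiable function f : ℝ → ℝ and every n ∈ ℕ, the function L^[n] f is infinitely differentiable and H(L^[n] f)(x) = L^[n](H f)(x) + 2·n·α·(L^[n] f)(x) for all x ∈ ℝ. -/
theorem smooth_deriv {g : ℝ → ℝ} (hg : ContDiff ℝ (⊤ : ℕ∞) g) :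
    ContDiff ℝ (⊤ : ℕ∞) (deriv g) :=
  (contDiff_infty_iff_deriv.1 hg).2

theorem smooth_hasDeriv {g : ℝ → ℝ} (hg : ContDiff ℝ (⊤ : ℕ∞) g) (x : ℝ) :
    HasDerivAt g (deriv g x) x :=
  ((contDiff_infty_iff_deriv.1 hg).1 x).hasDerivAt

theorem smooth_Lop (α : ℝ) {g : ℝ → ℝ} (hg : ContDiff ℝ (⊤ : ℕ∞) g) :
    ContDiff ℝ (⊤ : ℕ∞) (Lop α g) := by
  have := smooth_deriv hg
  unfold Lop
  fun_prop

theorem smooth_Hop (α : ℝ) {g : ℝ → ℝ} (hg : ContDiff ℝ (⊤ : ℕ∞) g) :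
    ContDiff ℝ (⊤ : ℕ∞) (Hop α g) := by
  have := smooth_deriv (smooth_deriv hg)
  unfold Hop
  fun_prop

theorem smooth_iter (α : ℝ) {g : ℝ → ℝ} (hg : ContDiff ℝ (⊤ : ℕ∞) g) (n : ℕ) :
    ContDiff ℝ (⊤ : ℕ∞) ((Lop α)^[n] g) := by
  induction n with
  | zero => simpa using hg
  | succ n ih => rw [Function.iterate_succ_apply']; exact smooth_Lop α ih

theorem Hop_Lop (α : ℝ) {g : ℝ → ℝ} (hg : ContDiff ℝ (⊤ : ℕ∞) g) (x : ℝ) :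
    Hop α (Lop α g) x = Lop α (Hop α g) x + 2 * α * Lop α g x := by
  have h0 := smooth_hasDeriv hg
  have h1 := smooth_hasDeriv (smooth_deriv hg)
  have h2 := smooth_hasDeriv (smooth_deriv (smooth_deriv hg))
  have e1 : deriv (Lop α g) = fun y => -α * deriv (deriv g) y + (1 * g y + y * deriv g y) := by
    funext y
    exact (((h1 y).const_mul (-α)).add ((hasDerivAt_id' y).mul (h0 y))).deriv
  have e2 : deriv (deriv (Lop α g)) x = -α * deriv (deriv (deriv g)) x
      + (1 * deriv g x + (1 * deriv g x + x * deriv (deriv g) x)) := by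
    rw [e1]
    exact (((h2 x).const_mul (-α)).add
      (((h0 x).const_mul 1).add ((hasDerivAt_id' x).mul (h1 x)))).deriv
  have e3 : deriv (Hop α g) x = -α ^ 2 * deriv (deriv (deriv g)) x
      + ((2 : ℕ) * x ^ (2 - 1) * g x + x ^ 2 * deriv g x) :=
    (((h2 x).const_mul (-α ^ 2)).add ((hasDerivAt_pow 2 x).mul (h0 x))).deriv
  have e4 : Hop α (Lop α g) x
      = -α ^ 2 * deriv (deriv (Lop α g)) x + x ^ 2 * Lop α g x := rfl
  have e5 : Lop α (Hop α g) x = -α * deriv (Hop α g) x + x * Hop α g x := rfl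
  rw [e4, e5, e2, e3]
  simp only [Lop, Hop]
  push_cast
  ring

/-- For every infinitely differentiable `f : ℝ → ℝ` and every `n`, the function
`L^[n] f` is infinitely differentiable and `H(L^[n] f) = L^[n](H f) + 2·n·α·(L^[n] f)`. -/
theorem statement4 (α : ℝ) (hα : 0 < α) (f : ℝ → ℝ) (hf : ContDiff ℝ (⊤ : ℕ∞) f) (n : ℕ) :
    ContDiff ℝ (⊤ : ℕ∞) ((Lop α)^[n] f) ∧
      ∀ x : ℝ, Hop α ((Lop α)^[n] f) x
        = (Lop α)^[n] (Hop α f) x + 2 * (n : ℝ) * α * ((Lop α)^[n] f) x := by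
  refine ⟨smooth_iter α hf n, ?_⟩
  induction n with
  | zero => intro x; simp
  | succ n ih =>
    intro x
    have hg := smooth_iter α hf n
    have hh := smooth_iter α (smooth_Hop α hf) n
    simp only [Function.iterate_succ_apply']
    rw [Hop_Lop α hg]
    generalize (Lop α)^[n] f = g at *
    generalize (Lop α)^[n] (Hop α f) = h at *
    have e : Hop α g = fun y => h y + 2 * (n : ℝ) * α * g y := funext ih
    have d : deriv (Hop α g) x = deriv h x + 2 * (n : ℝ) * α * deriv g x := by
      rw [e]
      exact ((smooth_hasDeriv hh x).add ((smooth_hasDeriv hg x).const_mul _)).deriv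
    have e5 : Lop α (Hop α g) x = -α * deriv (Hop α g) x + x * Hop α g x := rfl
    rw [e5, d, ih x]
    simp only [Lop]
    push_cast
    ring
end

section
/- For all natural numbers m ≠ n, the eigenfunctions f_m and f_n are orthogonal in L²(ℝ): the Lebesgue integral ∫_ℝ f_m(x)·f_n(x) dx equals 0. -/
open MeasureTheory

open Polynomial in
noncomputable def hP (α : ℝ) : ℕ → ℝ[X]
  | 0 => 1
  | n + 1 => -C α * derivative (hP α n) + 2 * X * hP α n

lemma hf0_deriv (α : ℝ) (hα : 0 < α) (x : ℝ) :
    HasDerivAt (hermiteF₀ α) (-(x / α) * hermiteF₀ α x) x := by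
  unfold hermiteF₀
  have h := (((hasDerivAt_pow 2 x).neg).div_const (2 * α)).exp
  refine h.congr_deriv ?_
  simp only [Pi.neg_apply]
  push_cast
  field_simp

lemma hF_eq (α : ℝ) (hα : 0 < α) (n : ℕ) :
    hermiteF α n = fun x => (hP α n).eval x * hermiteF₀ α x := by
  induction n with
  | zero => funext x; simp [hermiteF, hP]
  | succ n ih =>
    have : hermiteF α (n+1) = Lop α (hermiteF α n) := by
      unfold hermiteF
      rw [Function.iterate_succ_apply']
    rw [this, ih]
    funext x
    have hd := ((hP α n).hasDerivAt x).mul (hf0_deriv α hα x)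
    have hd2 : deriv (fun x => (hP α n).eval x * hermiteF₀ α x) x = _ := hd.deriv
    simp only [Lop]
    rw [hd2]
    simp only [hP, Polynomial.eval_add, Polynomial.eval_mul, Polynomial.eval_neg, Polynomial.eval_C,
      Polynomial.eval_X, Polynomial.eval_ofNat]
    field_simp
    ring

open Polynomial in
lemma hP_ode (α : ℝ) (n : ℕ) :
    C α * derivative (derivative (hP α n)) =
      2 * X * derivative (hP α n) - 2 * (n : ℝ[X]) * hP α n := by
  induction n with
  | zero => simp [hP]
  | succ n ih =>
    have h1 : derivative (hP α (n+1)) = 2 * ((n : ℝ[X]) + 1) * hP α n := by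
      simp only [hP, derivative_add, derivative_mul, derivative_neg, derivative_C, derivative_X,
        derivative_ofNat]
      linear_combination -ih
    have h2 : derivative (derivative (hP α (n+1))) =
        2 * ((n : ℝ[X]) + 1) * derivative (hP α n) := by
      rw [h1]
      simp [derivative_mul]
    rw [h2, h1]
    simp only [hP]
    push_cast
    ring

lemma h_int (α : ℝ) (hα : 0 < α) (p : Polynomial ℝ) :
    Integrable (fun x => p.eval x * (hermiteF₀ α x * hermiteF₀ α x)) := by
  have hw : ∀ x, hermiteF₀ α x * hermiteF₀ α x = Real.exp (-(1/α) * x ^ 2) := by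
    intro x
    unfold hermiteF₀
    rw [← Real.exp_add]
    congr 1
    field_simp
    ring
  simp only [hw]
  induction p using Polynomial.induction_on' with
  | add p q hp hq =>
    simp only [Polynomial.eval_add, add_mul]
    exact hp.add hq
  | monomial k a =>
    have h := integrable_rpow_mul_exp_neg_mul_sq (b := 1/α) (by positivity) (s := (k:ℝ))
      (by have : (0:ℝ) ≤ k := by positivity
          linarith)
    simp only [Real.rpow_natCast] at h
    simpa [Polynomial.eval_monomial, mul_assoc] using h.const_mul a

/-- For `m ≠ n`, the eigenfunctions `f_m` and `f_n` are orthogonal in `L²(ℝ)`: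
`∫_ℝ f_m(x)·f_n(x) dx = 0`. -/
theorem statement8 (α : ℝ) (hα : 0 < α) (m n : ℕ) (hmn : m ≠ n) :
    ∫ x : ℝ, hermiteF α m x * hermiteF α n x = 0 := by
  open Polynomial in
  have key : ∀ x, HasDerivAt
      (fun x => (derivative (hP α m) * hP α n - hP α m * derivative (hP α n)).eval x *
        (hermiteF₀ α x * hermiteF₀ α x))
      ((C (2 * ((n : ℝ) - m) / α) * (hP α m * hP α n)).eval x *
        (hermiteF₀ α x * hermiteF₀ α x)) x := by
    intro x
    have h0 := hf0_deriv α hα x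
    have hd := ((derivative (hP α m) * hP α n - hP α m * derivative (hP α n)).hasDerivAt x).mul
      (h0.mul h0)
    refine hd.congr_deriv ?_
    have em := congrArg (Polynomial.eval x) (hP_ode α m)
    have en := congrArg (Polynomial.eval x) (hP_ode α n)
    simp only [derivative_sub, derivative_mul, eval_add, eval_sub, eval_mul, eval_C, eval_X,
      eval_ofNat, eval_natCast, Pi.mul_apply] at em en ⊢
    field_simp
    linear_combination (hermiteF₀ α x) ^ 2 * ((eval x (hP α n)) * em - (eval x (hP α m)) * en)
  have hz := integral_eq_zero_of_hasDerivAt_of_integrable key (h_int α hα _) (h_int α hα _)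
  have hc : 2 * ((n : ℝ) - m) / α ≠ 0 := by
    have : (n : ℝ) - m ≠ 0 := sub_ne_zero.mpr (by exact_mod_cast hmn.symm)
    positivity
  simp only [Polynomial.eval_mul, Polynomial.eval_C, mul_assoc (2 * ((n : ℝ) - m) / α)] at hz
  rw [integral_const_mul] at hz
  have := (mul_eq_zero.mp hz).resolve_left hc
  rw [hF_eq α hα m, hF_eq α hα n, ← this]
  congr 1
  funext x
  ring
end

section
/- For every real α > 0, the ℂ-linear span of the equivalence classes in L²(ℝ, ℂ) (with Lebesgue measure) of the functions x ↦ xⁿ·exp(−x²/(2α)), for n ∈ ℕ, is dense in L²(ℝ, ℂ). (Hence the normalized eigenfunctions p_n(x)e^{−x²/(2α)} of the harmonic oscillator form an orthonormal basis of L²(ℝ).) -/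
open MeasureTheory

lemma aux_E (α : ℝ) (hα : 0 < α) (c : ℝ) :
    MemLp (fun x : ℝ => Real.exp (c * |x|) * Real.exp (-(x ^ 2) / (2 * α))) 2 volume := by
  rw [memLp_two_iff_integrable_sq (by fun_prop)]
  have h1 := (integrable_exp_neg_mul_sq (b := 1 / (2 * α)) (by positivity)).const_mul
    (Real.exp (2 * α * c ^ 2))
  refine h1.mono' (by fun_prop) (Filter.Eventually.of_forall fun x => ?_)
  rw [Real.norm_eq_abs, abs_of_nonneg (by positivity), ← Real.exp_add, ← Real.exp_add,
    ← Real.exp_nat_mul]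
  apply Real.exp_le_exp.mpr
  have h2 : 0 ≤ (|x| - 2 * α * c) ^ 2 / (2 * α) := by positivity
  have h3 : (|x| - 2 * α * c) ^ 2 / (2 * α) = x ^ 2 / (2 * α) - 2 * c * |x| + 2 * α * c ^ 2 := by
    rw [← sq_abs x]; field_simp; ring
  have h4 : -(1 / (2 * α)) * x ^ 2 = - (x ^ 2 / (2 * α)) := by ring
  have h5 : -(x ^ 2) / (2 * α) = - (x ^ 2 / (2 * α)) := by ring
  rw [h4, h5]; push_cast
  linarith

lemma aux_P (α : ℝ) (hα : 0 < α) (n : ℕ) :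
    MemLp (fun x : ℝ => (x : ℂ) ^ n * (Real.exp (-(x ^ 2) / (2 * α)) : ℂ)) 2 volume := by
  refine ((aux_E α hα 1).const_mul (n.factorial : ℝ)).mono (by fun_prop)
    (Filter.Eventually.of_forall fun x => ?_)
  have h := Real.pow_div_factorial_le_exp |x| (abs_nonneg x) n
  rw [div_le_iff₀ (by positivity)] at h
  rw [norm_mul, norm_pow, Complex.norm_real, Complex.norm_real, Real.norm_eq_abs, Real.norm_eq_abs,
    Real.norm_eq_abs, abs_of_nonneg (Real.exp_pos (-(x ^ 2) / (2 * α))).le, one_mul,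
    abs_of_nonneg (a := (n.factorial : ℝ) * _) (by positivity)]
  nlinarith [mul_le_mul_of_nonneg_right h (Real.exp_pos (-(x ^ 2) / (2 * α))).le]

lemma aux_F (h : ℝ → ℂ) (hh : Integrable h)
    (hz : ∀ ξ : ℝ, ∫ x : ℝ, Complex.exp ((ξ * Complex.I) * x) * h x = 0) : h =ᵐ[volume] 0 := by
  have hF : ∀ w : ℝ, VectorFourier.fourierIntegral Real.fourierChar volume
      (innerₗ ℝ).flip h w = 0 := by
    intro w
    rw [VectorFourier.fourierIntegral, ← hz (-2 * Real.pi * w)]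
    congr 1; ext x
    rw [Circle.smul_def, Real.fourierChar_apply, smul_eq_mul]
    congr 2
    simp
    ring
  apply ae_eq_zero_of_integral_contDiff_smul_eq_zero hh.locallyIntegrable
  intro g g_smooth g_cpt
  have hg₁ : HasCompactSupport (Complex.ofRealCLM ∘ g) := g_cpt.comp_left rfl
  have hg₂ : ContDiff ℝ _ (Complex.ofRealCLM ∘ g) := Complex.ofRealCLM.contDiff.comp g_smooth
  let φ : SchwartzMap ℝ ℂ := hg₁.toSchwartzMap hg₂
  let ψ : SchwartzMap ℝ ℂ := FourierTransformInv.fourierInv φ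
  have h1 := VectorFourier.integral_fourierIntegral_smul_eq_flip (L := innerₗ ℝ) (μ := volume)
    Real.continuous_fourierChar continuous_inner (ψ.integrable (μ := volume)) hh
  simp only [hF, smul_zero, integral_zero] at h1
  rw [← h1]
  congr 1; ext x
  have h2 : VectorFourier.fourierIntegral Real.fourierChar volume (innerₗ ℝ) ψ x
      = FourierTransform.fourier ψ x := by
    rw [SchwartzMap.fourier_coe]; rfl
  rw [h2, FourierTransform.fourier_fourierInv_eq]
  simp [φ]

/-- For every `α > 0`, the `ℂ`-linear span of the `L²`-classes of the functions
`x ↦ xⁿ·exp(−x²/(2α))`, `n ∈ ℕ`, is dense in `L²(ℝ, ℂ)`. -/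
theorem statement10 (α : ℝ) (hα : 0 < α) :
    Dense (↑(Submodule.span ℂ
      {g : Lp ℂ 2 (volume : Measure ℝ) |
        ∃ n : ℕ, (g : ℝ → ℂ) =ᵐ[volume]
          fun x : ℝ => (x : ℂ) ^ n * Real.exp (-(x ^ 2) / (2 * α))}) :
      Set (Lp ℂ 2 (volume : Measure ℝ))) := by
  rw [Submodule.dense_iff_topologicalClosure_eq_top, Submodule.topologicalClosure_eq_top_iff,
    Submodule.eq_bot_iff]
  intro f hf
  rw [Submodule.mem_orthogonal] at hf
  have hm : ∀ n : ℕ, ∫ x : ℝ, (x : ℂ) ^ n * ((Real.exp (-(x ^ 2) / (2 * α)) : ℂ) * f x) = 0 := by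
    intro n
    have h1 := hf ((aux_P α hα n).toLp _) (Submodule.subset_span ⟨n, MemLp.coeFn_toLp _⟩)
    rw [L2.inner_def] at h1
    rw [← h1]
    apply integral_congr_ae
    filter_upwards [MemLp.coeFn_toLp (aux_P α hα n)] with x hx
    rw [hx, RCLike.inner_apply]
    simp only [map_mul, map_pow, Complex.conj_ofReal]
    ring
  have hfm := Lp.memLp f
  have hfs := hfm.aestronglyMeasurable
  have hI : ∀ c : ℝ, Integrable fun x : ℝ =>
      Real.exp (c * |x|) * (Real.exp (-(x ^ 2) / (2 * α)) * ‖f x‖) := by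
    intro c
    refine ((aux_E α hα c).integrable_mul hfm.norm).congr (Filter.Eventually.of_forall fun x => ?_)
    simp [mul_assoc]
  have hh : Integrable fun x : ℝ => (Real.exp (-(x ^ 2) / (2 * α)) : ℂ) * f x := by
    refine (hI 0).mono' (by fun_prop) (Filter.Eventually.of_forall fun x => ?_)
    rw [norm_mul, Complex.norm_real, Real.norm_eq_abs, abs_of_nonneg (Real.exp_pos _).le]
    simp
  have h0 := aux_F _ hh (fun ξ => ?_)
  · rw [Lp.eq_zero_iff_ae_eq_zero]
    filter_upwards [h0] with x hx
    have h3 : (Real.exp (-(x ^ 2) / (2 * α)) : ℂ) ≠ 0 :=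
      Complex.ofReal_ne_zero.mpr (Real.exp_pos _).ne'
    exact (mul_eq_zero.mp hx).resolve_left h3
  · have hsum : ∀ x : ℝ, HasSum (fun n : ℕ => (|ξ| * |x|) ^ n / n.factorial *
        (Real.exp (-(x ^ 2) / (2 * α)) * ‖f x‖))
        (Real.exp (|ξ| * |x|) * (Real.exp (-(x ^ 2) / (2 * α)) * ‖f x‖)) := by
      intro x
      have := NormedSpace.expSeries_div_hasSum_exp (𝔸 := ℝ) (|ξ| * |x|)
      rw [← Real.exp_eq_exp_ℝ] at this
      exact this.mul_right _
    have key := hasSum_integral_of_dominated_convergence (μ := volume)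
      (F := fun (n : ℕ) (x : ℝ) => ((ξ * Complex.I) * x) ^ n / n.factorial *
        ((Real.exp (-(x ^ 2) / (2 * α)) : ℂ) * f x))
      (f := fun x : ℝ => Complex.exp ((ξ * Complex.I) * x) *
        ((Real.exp (-(x ^ 2) / (2 * α)) : ℂ) * f x))
      (fun n x => (|ξ| * |x|) ^ n / n.factorial * (Real.exp (-(x ^ 2) / (2 * α)) * ‖f x‖))
      (fun n => by fun_prop)
      (fun n => Filter.Eventually.of_forall fun x => by
        simp only [norm_mul, norm_div, norm_pow, Complex.norm_real, Complex.norm_I, mul_one,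
          Real.norm_eq_abs, abs_of_nonneg (Real.exp_pos _).le, Complex.norm_natCast]
        exact le_rfl)
      (Filter.Eventually.of_forall fun x => (hsum x).summable)
      ((hI |ξ|).congr (Filter.Eventually.of_forall fun x => (hsum x).tsum_eq.symm))
      (Filter.Eventually.of_forall fun x => by
        have := NormedSpace.expSeries_div_hasSum_exp (𝔸 := ℂ) ((ξ * Complex.I) * x)
        rw [← Complex.exp_eq_exp_ℂ] at this
        exact this.mul_right _)
    have hz : ∀ n : ℕ, ∫ x : ℝ, ((ξ * Complex.I) * x) ^ n / n.factorial *
        ((Real.exp (-(x ^ 2) / (2 * α)) : ℂ) * f x) = 0 := by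
      intro n
      have : ∀ x : ℝ, ((ξ * Complex.I) * x) ^ n / n.factorial *
        ((Real.exp (-(x ^ 2) / (2 * α)) : ℂ) * f x) = ((ξ * Complex.I) ^ n / n.factorial) *
        ((x : ℂ) ^ n * ((Real.exp (-(x ^ 2) / (2 * α)) : ℂ) * f x)) := by
        intro x; rw [mul_pow]; ring
      simp_rw [this]
      rw [integral_const_mul, hm n, mul_zero]
    simp only [hz] at key
    exact key.unique hasSum_zero
end

section
/- For every real α > 0, the set of equivalence classes in L²(ℝ, ℂ) (Lebesgue measure) of the functions x ↦ −α²·f″(x) + x²·f(x) + i·f(x), where f ranges over infinitely differentiable functions ℝ → ℂ with compact support, is dense in L²(ℝ, ℂ); the same holds with −i in place of +i. (That is, the harmonic oscillator H = α²Δ + x², defined on the test functions C_c^∞(ℝ), is essentially selfadjoint: H ± i have dense ranges.) -/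
open MeasureTheory

open scoped FourierTransform ContDiff

theorem aux_cutoff (α : ℝ) (c : ℂ) (v : ℝ → ℂ) (hvm : AEStronglyMeasurable v volume)
    (hv : ∀ f : ℝ → ℂ, ContDiff ℝ (⊤ : ℕ∞) f → HasCompactSupport f →
      ∫ x : ℝ, (-(α : ℂ) ^ 2 * deriv (deriv f) x + (x : ℂ) ^ 2 * f x + c * f x) * v x = 0)
    (f f1 f2 : ℝ → ℂ) (hf : ContDiff ℝ (⊤ : ℕ∞) f) (h1 : ∀ x, HasDerivAt f (f1 x) x)
    (h2 : ∀ x, HasDerivAt f1 (f2 x) x) (hf2 : Continuous f2)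
    (i0 : Integrable (fun x => f x * v x)) (i1 : Integrable (fun x => f1 x * v x))
    (i2 : Integrable (fun x : ℝ =>
      (-(α : ℂ) ^ 2 * f2 x + (x : ℂ) ^ 2 * f x + c * f x) * v x)) :
    ∫ x : ℝ, (-(α : ℂ) ^ 2 * f2 x + (x : ℂ) ^ 2 * f x + c * f x) * v x = 0 := by
  obtain ⟨χ, hχ, hχs, hχ0⟩ : ∃ χ : ℝ → ℂ, ContDiff ℝ (⊤ : ℕ∞) χ ∧ HasCompactSupport χ ∧
      χ 0 = 1 := by
    let b : ContDiffBump (0 : ℝ) := ⟨1, 2, by norm_num, by norm_num⟩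
    refine ⟨fun x => ((b x : ℝ) : ℂ), ?_, ?_, ?_⟩
    · exact Complex.ofRealCLM.contDiff.comp b.contDiff
    · exact b.hasCompactSupport.comp_left (g := fun r : ℝ => (r : ℂ)) (by simp)
    · have := b.one_of_mem_closedBall (x := 0) (by simp [b])
      simp [this]
  have hχ1 : ContDiff ℝ (⊤ : ℕ∞) (deriv χ) := by
    have : ContDiff ℝ ((⊤ : ℕ∞) + 1) χ := hχ
    exact (contDiff_succ_iff_deriv.1 this).2.2
  have hχ2 : ContDiff ℝ (⊤ : ℕ∞) (deriv (deriv χ)) := by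
    have : ContDiff ℝ ((⊤ : ℕ∞) + 1) (deriv χ) := hχ1
    exact (contDiff_succ_iff_deriv.1 this).2.2
  have d0 : ∀ x, HasDerivAt χ (deriv χ x) x := fun x =>
    (hχ.differentiable (by simp) x).hasDerivAt
  have d1 : ∀ x, HasDerivAt (deriv χ) (deriv (deriv χ) x) x := fun x =>
    (hχ1.differentiable (by simp) x).hasDerivAt
  obtain ⟨C0, hC0⟩ := hχ.continuous.bounded_above_of_compact_support hχs
  obtain ⟨C1, hC1⟩ := hχ1.continuous.bounded_above_of_compact_support hχs.deriv
  obtain ⟨C2, hC2⟩ := hχ2.continuous.bounded_above_of_compact_support hχs.deriv.deriv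
  have cf : Continuous f := hf.continuous
  have cf1 : Continuous f1 := continuous_iff_continuousAt.2 fun x => (h2 x).continuousAt
  have cχ := hχ.continuous
  have cχ1 := hχ1.continuous
  have cχ2 := hχ2.continuous
  let Φ : ℝ → ℝ → ℂ := fun ε x =>
    χ (x * ε) * ((-(α : ℂ) ^ 2 * f2 x + (x : ℂ) ^ 2 * f x + c * f x) * v x)
      - (α : ℂ) ^ 2 * ((ε : ℂ) ^ 2 * deriv (deriv χ) (x * ε) * (f x * v x)
        + 2 * ε * deriv χ (x * ε) * (f1 x * v x))
  have hΦ : ∀ ε : ℝ, ε ≠ 0 → ∫ x, Φ ε x = 0 := by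
    intro ε hε
    have s0 : ∀ x, HasDerivAt (fun x : ℝ => x * ε) ε x := fun x => by
      simpa using (hasDerivAt_id x).mul_const ε
    have e0 : ∀ x, HasDerivAt (fun x => χ (x * ε)) ((ε : ℂ) * deriv χ (x * ε)) x := fun x => by
      simpa using! (d0 (x * ε)).scomp x (s0 x)
    have e1 : ∀ x, HasDerivAt (fun x => deriv χ (x * ε)) ((ε : ℂ) * deriv (deriv χ) (x * ε)) x :=
      fun x => by simpa using! (d1 (x * ε)).scomp x (s0 x)
    have g1 : deriv (fun x => χ (x * ε) * f x) =
        fun x => (ε : ℂ) * deriv χ (x * ε) * f x + χ (x * ε) * f1 x := by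
      ext x
      exact ((e0 x).mul (h1 x)).deriv
    have g2 : ∀ x, deriv (deriv (fun x => χ (x * ε) * f x)) x =
        ((ε : ℂ) * ((ε : ℂ) * deriv (deriv χ) (x * ε))) * f x + (ε : ℂ) * deriv χ (x * ε) * f1 x +
          ((ε : ℂ) * deriv χ (x * ε) * f1 x + χ (x * ε) * f2 x) := by
      intro x
      rw [g1]
      exact ((((e1 x).const_mul (ε : ℂ)).mul (h1 x)).add ((e0 x).mul (h2 x))).deriv
    have := hv (fun x => χ (x * ε) * f x)
      ((hχ.comp (contDiff_id.mul contDiff_const)).mul hf)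
      (HasCompactSupport.mul_right
        (hχs.comp_homeomorph (Homeomorph.mulRight₀ ε hε)))
    rw [← this]
    congr 1
    ext x
    rw [g2 x]
    simp only [Φ]
    ring
  have key : Filter.Tendsto (fun n : ℕ => ∫ x, Φ (1 / ((n : ℝ) + 1)) x) Filter.atTop
      (nhds (∫ x, (-(α : ℂ) ^ 2 * f2 x + (x : ℂ) ^ 2 * f x + c * f x) * v x)) := by
    refine tendsto_integral_of_dominated_convergence
      (fun x => C0 * ‖(-(α : ℂ) ^ 2 * f2 x + (x : ℂ) ^ 2 * f x + c * f x) * v x‖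
        + ‖(α : ℂ) ^ 2‖ * (C2 * ‖f x * v x‖ + 2 * C1 * ‖f1 x * v x‖)) ?_ ?_ ?_ ?_
    · intro n
      have := i0.aestronglyMeasurable
      have := i1.aestronglyMeasurable
      have := i2.aestronglyMeasurable
      simp only [Φ]
      refine AEStronglyMeasurable.sub (AEStronglyMeasurable.mul ?_ i2.aestronglyMeasurable)
        (AEStronglyMeasurable.mul ?_ (AEStronglyMeasurable.add
          (AEStronglyMeasurable.mul ?_ i0.aestronglyMeasurable)
          (AEStronglyMeasurable.mul ?_ i1.aestronglyMeasurable)))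
      all_goals exact Continuous.aestronglyMeasurable (by fun_prop)
    · exact (i2.norm.const_mul _).add (((i0.norm.const_mul _).add (i1.norm.const_mul _)).const_mul _)
    · intro n
      refine Filter.Eventually.of_forall fun x => ?_
      have hε0 : (0 : ℝ) ≤ 1 / ((n : ℝ) + 1) := by positivity
      have hε1 : 1 / ((n : ℝ) + 1) ≤ 1 := by
        rw [div_le_one (by positivity)]
        linarith [(Nat.cast_nonneg n : (0 : ℝ) ≤ n)]
      generalize 1 / ((n : ℝ) + 1) = ε at hε0 hε1
      simp only [Φ]
      have hn : ‖(ε : ℂ)‖ ≤ 1 := by simpa [abs_of_nonneg hε0] using hε1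
      have hC1' : 0 ≤ C1 := (norm_nonneg _).trans (hC1 0)
      have hC2' : 0 ≤ C2 := (norm_nonneg _).trans (hC2 0)
      refine (norm_sub_le _ _).trans (add_le_add ?_ ?_)
      · rw [norm_mul]
        gcongr
        exact hC0 _
      · rw [norm_mul]
        gcongr
        refine (norm_add_le _ _).trans (add_le_add ?_ ?_)
        · rw [norm_mul, norm_mul, norm_pow]
          gcongr
          calc ‖(ε : ℂ)‖ ^ 2 * ‖deriv (deriv χ) (x * ε)‖ ≤ 1 * C2 := by
                gcongr
                · exact pow_le_one₀ (norm_nonneg _) hn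
                · exact hC2 _
            _ = C2 := one_mul _
        · rw [norm_mul, norm_mul, norm_mul]
          refine mul_le_mul_of_nonneg_right ?_ (norm_nonneg _)
          calc ‖(2 : ℂ)‖ * ‖(ε : ℂ)‖ * ‖deriv χ (x * ε)‖ ≤ 2 * 1 * C1 := by
                gcongr
                · simp
                · exact hC1 _
            _ = 2 * C1 := by ring
    · refine Filter.Eventually.of_forall fun x => ?_
      have hc : Continuous (fun ε : ℝ => Φ ε x) := by
        simp only [Φ]
        fun_prop
      have := (hc.tendsto 0).comp (tendsto_one_div_add_atTop_nhds_zero_nat (𝕜 := ℝ))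
      have e : Φ 0 x = (-(α : ℂ) ^ 2 * f2 x + (x : ℂ) ^ 2 * f x + c * f x) * v x := by
        simp [Φ, hχ0]
      rw [e] at this
      exact this
  have z : (fun n : ℕ => ∫ x, Φ (1 / ((n : ℝ) + 1)) x) = fun _ => 0 := by
    ext n
    exact hΦ _ (by positivity)
  rw [z] at key
  exact (tendsto_nhds_unique key tendsto_const_nhds)

theorem aux_fourier (h : ℝ → ℂ) (hi : Integrable h) (h0 : ∀ ξ, 𝓕 h ξ = 0) :
    ∀ᵐ x, h x = 0 := by
  apply ae_eq_zero_of_integral_contDiff_smul_eq_zero hi.locallyIntegrable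
  intro g hg hgs
  have hgc : HasCompactSupport (fun x => (g x : ℂ)) :=
    hgs.comp_left (g := fun r : ℝ => (r : ℂ)) (by simp)
  let φ : SchwartzMap ℝ ℂ := hgc.toSchwartzMap (Complex.ofRealCLM.contDiff.comp hg)
  have e := VectorFourier.integral_fourierIntegral_smul_eq_flip (L := innerₗ ℝ)
    (e := Real.fourierChar) (μ := volume) (ν := volume)
    Real.continuous_fourierChar continuous_inner hi (𝓕⁻ φ : SchwartzMap ℝ ℂ).integrable
  have e1 : ∀ ξ, VectorFourier.fourierIntegral Real.fourierChar volume (innerₗ ℝ) h ξ = 0 := h0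
  have e2 : ∀ x, VectorFourier.fourierIntegral Real.fourierChar volume (innerₗ ℝ).flip
      (𝓕⁻ φ : SchwartzMap ℝ ℂ) x = g x := by
    intro x
    have : (𝓕 (𝓕⁻ φ : SchwartzMap ℝ ℂ) : SchwartzMap ℝ ℂ) x = φ x := by
      rw [FourierTransform.fourier_fourierInv_eq]
    rw [flip_innerₗ]
    exact this
  simp only [e1, e2, zero_smul, integral_zero] at e
  rw [e]
  congr 1
  ext x
  simp [mul_comm]

theorem aux_ode (α : ℝ) (hα : 0 < α) (c : ℂ) (hc : c.re = 0) (F F' : ℝ → ℂ)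
    (hF : ∀ ξ, HasDerivAt F (F' ξ) ξ)
    (h : ∀ ξ : ℝ, (α + c + 4 * (Real.pi : ℂ) ^ 2 * α ^ 2 * ξ ^ 2) * F ξ + 2 * α * ξ * F' ξ = 0) :
    ∀ ξ, F ξ = 0 := by
  let N : ℝ → ℝ := fun ξ => (F ξ).re ^ 2 + (F ξ).im ^ 2
  have hre : ∀ ξ, HasDerivAt (fun t => (F t).re) (F' ξ).re ξ := fun ξ =>
    Complex.reCLM.hasFDerivAt.comp_hasDerivAt ξ (hF ξ)
  have him : ∀ ξ, HasDerivAt (fun t => (F t).im) (F' ξ).im ξ := fun ξ =>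
    Complex.imCLM.hasFDerivAt.comp_hasDerivAt ξ (hF ξ)
  have hN : ∀ ξ, HasDerivAt (fun t => t * N t)
      (1 * N ξ + ξ * (2 * (F ξ).re * (F' ξ).re + 2 * (F ξ).im * (F' ξ).im)) ξ := by
    intro ξ
    refine (hasDerivAt_id ξ).mul ?_
    simpa using! ((hre ξ).pow 2).add ((him ξ).pow 2)
  have anti : Antitone (fun t => t * N t) := by
    apply antitone_of_deriv_nonpos (fun ξ => (hN ξ).differentiableAt)
    intro ξ
    rw [(hN ξ).deriv]
    have a := congrArg Complex.re (h ξ)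
    have b := congrArg Complex.im (h ξ)
    have ep : 4 * (Real.pi : ℂ) ^ 2 * α ^ 2 * ξ ^ 2 = ((4 * Real.pi ^ 2 * α ^ 2 * ξ ^ 2 : ℝ) : ℂ) := by
      push_cast; ring
    have eq : 2 * (α : ℂ) * ξ = ((2 * α * ξ : ℝ) : ℂ) := by push_cast; ring
    rw [ep, eq] at a b
    simp only [Complex.add_re, Complex.add_im, Complex.mul_re, Complex.mul_im, Complex.ofReal_re,
      Complex.ofReal_im, hc, Complex.zero_re, Complex.zero_im] at a b
    have : α * (1 * N ξ + ξ * (2 * (F ξ).re * (F' ξ).re + 2 * (F ξ).im * (F' ξ).im))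
        = -(4 * Real.pi ^ 2 * α ^ 2 * ξ ^ 2 * N ξ) := by
      simp only [N]
      linear_combination (F ξ).re * a + (F ξ).im * b
    have p : 0 ≤ 4 * Real.pi ^ 2 * α ^ 2 * ξ ^ 2 * N ξ := by
      simp only [N]; positivity
    by_contra hh
    push Not at hh
    have := mul_pos hα hh
    linarith
  have fin : ∀ ξ, N ξ = 0 → F ξ = 0 := by
    intro ξ hξ
    simp only [N] at hξ
    apply Complex.ext
    · simp; nlinarith [sq_nonneg (F ξ).re, sq_nonneg (F ξ).im]
    · simp; nlinarith [sq_nonneg (F ξ).re, sq_nonneg (F ξ).im]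
  have nn : ∀ ξ, 0 ≤ N ξ := fun ξ => by simp only [N]; positivity
  intro ξ
  rcases lt_trichotomy ξ 0 with hξ | hξ | hξ
  · apply fin
    have := anti hξ.le
    simp only [zero_mul] at this
    nlinarith [nn ξ]
  · subst hξ
    have := h 0
    simp only [Complex.ofReal_zero, mul_zero, zero_mul, add_zero, ne_eq, OfNat.ofNat_ne_zero,
      not_false_eq_true, zero_pow] at this
    rcases mul_eq_zero.1 this with h' | h'
    · have := congrArg Complex.re h'
      simp [hc] at this
      exact absurd this hα.ne'
    · exact h'
  · apply fin
    have := anti hξ.le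
    simp only [zero_mul] at this
    nlinarith [nn ξ]

theorem aux_gauss (α : ℝ) (hα : 0 < α) (ξ : ℝ) :
    MemLp (fun x : ℝ => Complex.exp (-(x : ℂ) ^ 2 / (2 * α) - 2 * Real.pi * ξ * x * Complex.I)) 2
      volume ∧
    MemLp (fun x : ℝ => (x : ℂ) *
      Complex.exp (-(x : ℂ) ^ 2 / (2 * α) - 2 * Real.pi * ξ * x * Complex.I)) 2 volume := by
  have hn : ∀ x : ℝ,
      ‖Complex.exp (-(x : ℂ) ^ 2 / (2 * α) - 2 * Real.pi * ξ * x * Complex.I)‖ ^ 2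
        = Real.exp (-(1 / α) * x ^ 2) := by
    intro x
    have : -(x : ℂ) ^ 2 / (2 * α) - 2 * Real.pi * ξ * x * Complex.I =
      ((-x ^ 2 / (2 * α) : ℝ) : ℂ) + ((-(2 * Real.pi * ξ * x) : ℝ) : ℂ) * Complex.I := by
      push_cast; ring
    rw [this, Complex.exp_add, norm_mul, Complex.norm_exp_ofReal_mul_I, Complex.norm_exp_ofReal,
      mul_one, ← Real.exp_nat_mul]
    congr 1
    push_cast
    field_simp
  have hb : 0 < 1 / α := by positivity
  constructor
  · rw [memLp_two_iff_integrable_sq_norm (Continuous.aestronglyMeasurable (by fun_prop))]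
    simp_rw [hn]
    exact integrable_exp_neg_mul_sq hb
  · rw [memLp_two_iff_integrable_sq_norm (Continuous.aestronglyMeasurable (by fun_prop))]
    simp_rw [norm_mul, mul_pow, hn]
    have := integrable_rpow_mul_exp_neg_mul_sq hb (s := 2) (by norm_num)
    simpa using this

theorem aux_weak (α : ℝ) (hα : 0 < α) (c : ℂ) (hc : c.re = 0) (v : ℝ → ℂ)
    (hvm : MemLp v 2 volume)
    (hv : ∀ f : ℝ → ℂ, ContDiff ℝ (⊤ : ℕ∞) f → HasCompactSupport f →
      ∫ x : ℝ, (-(α : ℂ) ^ 2 * deriv (deriv f) x + (x : ℂ) ^ 2 * f x + c * f x) * v x = 0) :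
    ∀ᵐ x, v x = 0 := by
  let E : ℝ → ℝ → ℂ := fun ξ x =>
    Complex.exp (-(x : ℂ) ^ 2 / (2 * α) - 2 * Real.pi * ξ * x * Complex.I)
  have hαc : (α : ℂ) ≠ 0 := by exact_mod_cast hα.ne'
  have j0 : ∀ ξ, Integrable (fun x => E ξ x * v x) := fun ξ =>
    (aux_gauss α hα ξ).1.integrable_mul hvm
  have j1 : ∀ ξ, Integrable (fun x : ℝ => (x : ℂ) * E ξ x * v x) := fun ξ =>
    (aux_gauss α hα ξ).2.integrable_mul hvm
  let h : ℝ → ℂ := fun x => E 0 x * v x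
  have hE : ∀ ξ x, Complex.exp (↑(-2 * Real.pi * x * ξ) * Complex.I) * E 0 x = E ξ x := by
    intro ξ x
    simp only [E]
    rw [← Complex.exp_add]
    congr 1
    push_cast
    ring
  have F0 : ∀ ξ, 𝓕 h ξ = ∫ x, E ξ x * v x := by
    intro ξ
    rw [Real.fourier_real_eq_integral_exp_smul]
    congr 1
    ext x
    rw [smul_eq_mul, ← hE ξ x]
    simp only [h]
    ring
  have F1 : ∀ ξ, 𝓕 (fun x : ℝ => (-2 * Real.pi * Complex.I * x) • h x) ξ =
      -2 * Real.pi * Complex.I * ∫ x : ℝ, (x : ℂ) * E ξ x * v x := by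
    intro ξ
    rw [Real.fourier_real_eq_integral_exp_smul, ← integral_const_mul]
    congr 1
    ext x
    rw [smul_eq_mul, smul_eq_mul, ← hE ξ x]
    simp only [h]
    ring
  have hz : ∀ ξ, 𝓕 h ξ = 0 := by
    refine aux_ode α hα c hc (𝓕 h) _ (fun ξ => Real.hasDerivAt_fourier (j0 0) ?_ ξ) ?_
    · refine (j1 0).congr (Filter.Eventually.of_forall fun x => ?_)
      simp [h, E, mul_assoc]
    intro ξ
    rw [F0, F1]
    let q : ℝ → ℂ := fun x => -(x : ℂ) / α - 2 * Real.pi * ξ * Complex.I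
    have hd : ∀ x : ℝ, HasDerivAt (fun y : ℝ => (y : ℂ)) 1 x := fun x => Complex.ofRealCLM.hasDerivAt
    have dE : ∀ x, HasDerivAt (E ξ) (q x * E ξ x) x := by
      intro x
      have a1 := ((((hd x).pow 2).neg.div_const (2 * (α : ℂ))).sub
        (((hd x).const_mul (2 * Real.pi * ξ : ℂ)).mul_const Complex.I)).cexp
      convert! a1 using 1
      simp only [q, E]
      rw [mul_comm]
      congr 1
      simp
      field_simp
    have dq : ∀ x, HasDerivAt q (-1 / α) x := by
      intro x
      exact ((hd x).neg.div_const (α : ℂ)).sub_const _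
    have cE : Continuous (E ξ) := by simp only [E]; fun_prop
    have id0 : ∀ x : ℝ, (-(α : ℂ) ^ 2 * (-1 / α * E ξ x + q x * (q x * E ξ x)) + (x : ℂ) ^ 2 * E ξ x
        + c * E ξ x) * v x = (α + c + 4 * (Real.pi : ℂ) ^ 2 * α ^ 2 * ξ ^ 2) * (E ξ x * v x) +
          2 * α * ξ * (-2 * Real.pi * Complex.I) * ((x : ℂ) * E ξ x * v x) := by
      intro x
      simp only [q]
      field_simp
      ring_nf
      simp only [Complex.I_sq]
      ring
    have main := aux_cutoff α c v hvm.1 hv (E ξ) (fun x => q x * E ξ x)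
      (fun x => -1 / α * E ξ x + q x * (q x * E ξ x)) ?_ dE (fun x => (dq x).mul (dE x)) ?_
      (j0 ξ) ?_ ?_
    · simp_rw [id0] at main
      rw [integral_add ((j0 ξ).const_mul _) ((j1 ξ).const_mul _), integral_const_mul,
        integral_const_mul] at main
      rw [← main]
      ring
    · have hco : ContDiff ℝ (⊤ : ℕ∞) (fun y : ℝ => (y : ℂ)) := Complex.ofRealCLM.contDiff
      exact ((((hco.pow 2).neg).div_const _).sub ((contDiff_const.mul hco).mul contDiff_const)).cexp
    · simp only [q]
      fun_prop
    · refine (((j1 ξ).const_mul (-1 / (α : ℂ))).sub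
        ((j0 ξ).const_mul (2 * Real.pi * ξ * Complex.I))).congr
        (Filter.Eventually.of_forall fun x => ?_)
      simp only [q, Pi.sub_apply]
      ring
    · simp_rw [id0]
      exact ((j0 ξ).const_mul _).add ((j1 ξ).const_mul _)
  filter_upwards [aux_fourier h (j0 0) hz] with x hx
  exact (mul_eq_zero.1 hx).resolve_left (Complex.exp_ne_zero _)

theorem aux_main (α : ℝ) (hα : 0 < α) (c : ℂ) (hc : c.re = 0) :
    Dense {g : Lp ℂ 2 (volume : Measure ℝ) |
        ∃ f : ℝ → ℂ, ContDiff ℝ (⊤ : ℕ∞) f ∧ HasCompactSupport f ∧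
          (g : ℝ → ℂ) =ᵐ[volume] fun x : ℝ =>
            -(α : ℂ) ^ 2 * deriv (deriv f) x + (x : ℂ) ^ 2 * f x + c * f x} := by
  have hD : ∀ f : ℝ → ℂ, ContDiff ℝ (⊤ : ℕ∞) f → ContDiff ℝ (⊤ : ℕ∞) (deriv f) := by
    intro f hf
    have : ContDiff ℝ ((⊤ : ℕ∞) + 1) f := hf
    exact (contDiff_succ_iff_deriv.1 this).2.2
  have hdf : ∀ f : ℝ → ℂ, ContDiff ℝ (⊤ : ℕ∞) f → Differentiable ℝ f := fun f hf =>
    hf.differentiable (by simp)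
  let K : Submodule ℂ (Lp ℂ 2 (volume : Measure ℝ)) :=
    { carrier := {g : Lp ℂ 2 (volume : Measure ℝ) |
        ∃ f : ℝ → ℂ, ContDiff ℝ (⊤ : ℕ∞) f ∧ HasCompactSupport f ∧
          (g : ℝ → ℂ) =ᵐ[volume] fun x : ℝ =>
            -(α : ℂ) ^ 2 * deriv (deriv f) x + (x : ℂ) ^ 2 * f x + c * f x}
      zero_mem' := by
        refine ⟨0, contDiff_const, HasCompactSupport.zero, ?_⟩
        filter_upwards [Lp.coeFn_zero ℂ 2 (volume : Measure ℝ)] with x hx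
        have : deriv (0 : ℝ → ℂ) = 0 := by ext y; simp
        rw [hx, this, this]
        simp
      add_mem' := by
        rintro a b ⟨f, hf, hfs, hfe⟩ ⟨g, hg, hgs, hge⟩
        refine ⟨f + g, hf.add hg, hfs.add hgs, ?_⟩
        filter_upwards [hfe, hge, Lp.coeFn_add a b] with x h1 h2 h3
        have e1 : deriv (f + g) = deriv f + deriv g := by
          ext y; exact deriv_add (hdf f hf y) (hdf g hg y)
        have e2 : deriv (deriv f + deriv g) x = deriv (deriv f) x + deriv (deriv g) x :=
          deriv_add (hdf _ (hD f hf) x) (hdf _ (hD g hg) x)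
        rw [h3, Pi.add_apply, h1, h2, e1, e2, Pi.add_apply]
        ring
      smul_mem' := by
        rintro k a ⟨f, hf, hfs, hfe⟩
        refine ⟨fun x => k * f x, contDiff_const.mul hf, hfs.mul_left, ?_⟩
        filter_upwards [hfe, Lp.coeFn_smul k a] with x h1 h3
        have e1 : deriv (fun x => k * f x) = fun x => k * deriv f x := by
          ext y; exact deriv_const_mul k (hdf f hf y)
        have e2 : deriv (fun x => k * deriv f x) x = k * deriv (deriv f) x :=
          deriv_const_mul k (hdf _ (hD f hf) x)
        rw [h3, Pi.smul_apply, h1, e1, e2, smul_eq_mul]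
        ring }
  suffices hK : K.topologicalClosure = ⊤ from Submodule.dense_iff_topologicalClosure_eq_top.2 hK
  rw [Submodule.topologicalClosure_eq_top_iff, Submodule.eq_bot_iff]
  intro u hu
  have hum : MemLp (fun x => (starRingEnd ℂ) (u x)) 2 volume := (Lp.memLp u).star
  have key := aux_weak α hα c hc _ hum ?_
  · apply Lp.ext
    filter_upwards [key, Lp.coeFn_zero ℂ 2 (volume : Measure ℝ)] with x hx hx0
    rw [hx0]
    simpa using hx
  intro f hf hfs
  have cont : Continuous (fun x : ℝ =>
      -(α : ℂ) ^ 2 * deriv (deriv f) x + (x : ℂ) ^ 2 * f x + c * f x) := by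
    have := hf.continuous
    have := (hD _ (hD f hf)).continuous
    fun_prop
  have supp : HasCompactSupport (fun x : ℝ =>
      -(α : ℂ) ^ 2 * deriv (deriv f) x + (x : ℂ) ^ 2 * f x + c * f x) :=
    ((hfs.deriv.deriv.mul_left).add hfs.mul_left).add hfs.mul_left
  have mem := cont.memLp_of_hasCompactSupport (p := 2) (μ := volume) supp
  have hin : mem.toLp ∈ K := ⟨f, hf, hfs, mem.coeFn_toLp⟩
  have := (Submodule.mem_orthogonal' K u).1 hu _ hin
  rw [L2.inner_def] at this
  rw [← this]
  apply integral_congr_ae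
  filter_upwards [mem.coeFn_toLp] with x hx
  rw [hx]
  simp [mul_comm]

/-- For every `α > 0`, the set of `L²`-classes of the functions
`x ↦ −α²·f″(x) + x²·f(x) + i·f(x)`, with `f` ranging over smooth compactly supported functions
`ℝ → ℂ`, is dense in `L²(ℝ, ℂ)`; and likewise with `−i` in place of `+i`.  (The harmonic
oscillator on the test functions is essentially selfadjoint.) -/
theorem statement11 (α : ℝ) (hα : 0 < α) :
    Dense {g : Lp ℂ 2 (volume : Measure ℝ) |
        ∃ f : ℝ → ℂ, ContDiff ℝ (⊤ : ℕ∞) f ∧ HasCompactSupport f ∧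
          (g : ℝ → ℂ) =ᵐ[volume] fun x : ℝ =>
            -(α : ℂ) ^ 2 * deriv (deriv f) x + (x : ℂ) ^ 2 * f x + Complex.I * f x} ∧
      Dense {g : Lp ℂ 2 (volume : Measure ℝ) |
        ∃ f : ℝ → ℂ, ContDiff ℝ (⊤ : ℕ∞) f ∧ HasCompactSupport f ∧
          (g : ℝ → ℂ) =ᵐ[volume] fun x : ℝ =>
            -(α : ℂ) ^ 2 * deriv (deriv f) x + (x : ℂ) ^ 2 * f x - Complex.I * f x} := by
  refine ⟨aux_main α hα Complex.I (by simp), ?_⟩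
  simpa only [neg_mul, ← sub_eq_add_neg] using aux_main α hα (-Complex.I) (by simp)
end

section
/- Let B be a C*-algebra and let φ be a map from the 2×2 upper triangular complex matrices to B that is ℂ-linear, multiplicative (φ(M N) = φ(M)·φ(N) for all upper triangular M, N), and satisfies φ(M(conj c, conj b, conj a)) = star(φ(M(a, b, c))) for all a, b, c ∈ ℂ. Then φ(M(a, b, c)) = 0 for all a, b, c ∈ ℂ. (Hence the enveloping C*-algebra of this Banach *-algebra is 0.) -/
/-- The upper triangular matrix `M(a, b, c) = !![a, b; 0, c]`. -/
def upperTri (a b c : ℂ) : Matrix (Fin 2) (Fin 2) ℂ := !![a, b; 0, c]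

/-- Any `ℂ`-linear multiplicative map `φ` from the 2×2 upper triangular
complex matrices (with the involution `M(a,b,c)* = M(conj c, conj b, conj a)`) to a C*-algebra
`B`, intertwining the involutions, vanishes identically.  (The enveloping C*-algebra of this
Banach *-algebra is 0.) -/
theorem statement14 {B : Type*} [NormedRing B] [StarRing B] [CStarRing B]
    [NormedAlgebra ℂ B] [CompleteSpace B]
    (φ : Matrix (Fin 2) (Fin 2) ℂ → B)
    (hadd : ∀ a b c a' b' c' : ℂ,
      φ (upperTri a b c + upperTri a' b' c') = φ (upperTri a b c) + φ (upperTri a' b' c'))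
    (hsmul : ∀ z a b c : ℂ, φ (z • upperTri a b c) = z • φ (upperTri a b c))
    (hmul : ∀ a b c a' b' c' : ℂ,
      φ (upperTri a b c * upperTri a' b' c') = φ (upperTri a b c) * φ (upperTri a' b' c'))
    (hstar : ∀ a b c : ℂ,
      φ (upperTri (starRingEnd ℂ c) (starRingEnd ℂ b) (starRingEnd ℂ a))
        = star (φ (upperTri a b c))) :
    ∀ a b c : ℂ, φ (upperTri a b c) = 0 := by
  have h0 : φ (upperTri 0 0 0) = 0 := by
    have h := hsmul 0 0 0 0
    have e : (0 : ℂ) • upperTri 0 0 0 = upperTri 0 0 0 := by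
      ext i j; fin_cases i <;> fin_cases j <;> simp [upperTri]
    rw [e, zero_smul] at h
    exact h
  have hs : φ (upperTri 0 0 1) = star (φ (upperTri 1 0 0)) := by
    simpa using hstar 1 0 0
  have he : φ (upperTri 1 0 0) = 0 := by
    have h := hmul 0 0 1 1 0 0
    have e : upperTri 0 0 1 * upperTri 1 0 0 = upperTri 0 0 0 := by
      ext i j; fin_cases i <;> fin_cases j <;> simp [upperTri]
    rw [e, h0, hs] at h
    exact CStarRing.star_mul_self_eq_zero_iff _ |>.1 h.symm
  have hf : φ (upperTri 0 0 1) = 0 := by rw [hs, he, star_zero]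
  intro a b c
  have e1 : upperTri a b c = upperTri a b 0 + upperTri 0 0 c := by
    ext i j; fin_cases i <;> fin_cases j <;> simp [upperTri]
  have e2 : upperTri a b 0 = upperTri 1 0 0 * upperTri a b 0 := by
    ext i j; fin_cases i <;> fin_cases j <;> simp [upperTri]
  have e3 : upperTri 0 0 c = upperTri 0 0 1 * upperTri 0 0 c := by
    ext i j; fin_cases i <;> fin_cases j <;> simp [upperTri]
  rw [e1, hadd, e2, e3, hmul, hmul, he, hf, zero_mul, zero_mul, add_zero]
end

section
/- Let (Pₙ)ₙ≥0 be a sequence of orthogonal projections on a complex Hilbert space 𝓗 with P₀ = 0 and Pₙ ∘ Pₙ₊₁ = Pₙ₊₁ ∘ Pₙ = Pₙ for all n (an increasing sequence), and put Qₙ = Pₙ − Pₙ₋₁ for n ≥ 1. Let T be a bounded linear operator on 𝓗 such that ‖(1 − Pₙ₊₁) ∘ T ∘ Pₙ‖ ≤ 2⁻ⁿ and ‖(1 − Pₙ₊₁) ∘ T* ∘ Pₙ‖ ≤ 2⁻ⁿ for all n ≥ 1, where T* is the adjoint of T. Then there exists a constant C such that for every N, ‖Σ_{a=1}^{N} Σ_{b=1}^{N}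 (b − a) • (Q_a ∘ T ∘ Q_b)‖ ≤ C. -/
open ContinuousLinearMap

section aux
variable {H : Type*} [NormedAddCommGroup H] [InnerProductSpace ℂ H] [CompleteSpace H]

lemma aux_adj {A : H →L[ℂ] H} (h : IsSelfAdjoint A) (x y : H) :
    inner ℂ (A x) y = inner ℂ x (A y) := by
  have h1 : ContinuousLinearMap.adjoint A = A := h
  conv_lhs => rw [← h1]
  exact ContinuousLinearMap.adjoint_inner_left A y x

lemma aux_self {A : H →L[ℂ] H} (h : IsSelfAdjoint A) (hi : A * A = A) (x : H) :
    inner ℂ x (A x) = ((‖A x‖ ^ 2 : ℝ) : ℂ) := by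
  have h2 : A (A x) = A x := congrArg (fun B : H →L[ℂ] H => B x) hi
  have h1 := inner_self_eq_norm_sq_to_K (𝕜 := ℂ) (A x)
  rw [aux_adj h, h2] at h1
  rw [h1]; norm_cast

lemma aux_le {A : H →L[ℂ] H} (h : IsSelfAdjoint A) (hi : A * A = A) (x : H) :
    ‖A x‖ ≤ ‖x‖ := by
  have h1 : ‖inner ℂ x (A x)‖ ≤ ‖x‖ * ‖A x‖ := norm_inner_le_norm _ _
  rw [aux_self h hi, Complex.norm_real, Real.norm_of_nonneg (by positivity)] at h1
  by_contra! hc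
  nlinarith [norm_nonneg x]

lemma aux_q {A B : H →L[ℂ] H} (h : IsSelfAdjoint A) (hi : A * A = A) (hB : IsSelfAdjoint B)
    (hBA : B * A = A) (x : H) :
    ‖(B - A) x‖ ^ 2 = ‖B x‖ ^ 2 - ‖A x‖ ^ 2 := by
  have h2 : B (A x) = A x := congrArg (fun B : H →L[ℂ] H => B x) hBA
  have h3 : (inner ℂ (B x) (A x) : ℂ) = ((‖A x‖ ^ 2 : ℝ) : ℂ) := by
    rw [aux_adj hB, h2, aux_self h hi]
  rw [sub_apply, norm_sub_sq (𝕜 := ℂ), h3]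
  simp only [RCLike.re_to_complex, Complex.ofReal_re]
  ring

variable (P : ℕ → H →L[ℂ] H) (hP0 : P 0 = 0)
    (hsa : ∀ n : ℕ, IsSelfAdjoint (P n))
    (hidem : ∀ n : ℕ, P n * P n = P n)
    (h1 : ∀ n : ℕ, P n * P (n + 1) = P n) (h2 : ∀ n : ℕ, P (n + 1) * P n = P n)

include hsa hidem h2 in
lemma aux_q_le (n : ℕ) : ‖P (n + 1) - P n‖ ≤ 1 := by
  refine ContinuousLinearMap.opNorm_le_bound _ zero_le_one fun x => ?_
  have := aux_q (hsa n) (hidem n) (hsa (n+1)) (h2 n) x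
  have h3 := aux_le (hsa (n+1)) (hidem (n+1)) x
  rw [one_mul]
  refine le_of_sq_le_sq ?_ (norm_nonneg x)
  nlinarith [norm_nonneg (P (n+1) x), sq_nonneg ‖P n x‖]

include hsa hidem h2 in
lemma aux_sum_le (N : ℕ) (x : H) :
    ∑ n ∈ Finset.range N, ‖(P (n + 1) - P n) x‖ ^ 2 ≤ ‖x‖ ^ 2 := by
  simp_rw [fun n => aux_q (hsa n) (hidem n) (hsa (n+1)) (h2 n) x]
  rw [Finset.sum_range_sub (fun n => ‖P n x‖ ^ 2)]
  have h3 := aux_le (hsa N) (hidem N) x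
  nlinarith [norm_nonneg (P N x), sq_nonneg ‖P 0 x‖]

include hsa hidem h2 in
lemma aux_diag (T : H →L[ℂ] H) (N : ℕ) :
    ‖∑ n ∈ Finset.range N, (P (n + 2) - P (n + 1)) * (T * (P (n + 1) - P n))‖ ≤ ‖T‖ := by
  refine ContinuousLinearMap.opNorm_le_of_re_inner_le (norm_nonneg T) fun x y hx hy => ?_
  rw [ContinuousLinearMap.sum_apply, sum_inner, map_sum]
  have t : ∀ n, RCLike.re (inner ℂ (((P (n + 2) - P (n + 1)) * (T * (P (n + 1) - P n))) x) y) ≤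
      ‖T‖ * ((‖(P (n + 1) - P n) x‖ ^ 2 + ‖(P (n + 1 + 1) - P (n + 1)) y‖ ^ 2) / 2) := by
    intro n
    have hs : IsSelfAdjoint (P (n + 2) - P (n + 1)) := (hsa _).sub (hsa _)
    have e : inner ℂ (((P (n + 2) - P (n + 1)) * (T * (P (n + 1) - P n))) x) y
        = inner ℂ (T ((P (n + 1) - P n) x)) ((P (n + 1 + 1) - P (n + 1)) y) :=
      aux_adj hs _ _
    rw [e]
    refine (re_inner_le_norm _ _).trans ?_
    set u := (P (n + 1) - P n) x
    set v := (P (n + 1 + 1) - P (n + 1)) y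
    calc ‖T u‖ * ‖v‖ ≤ (‖T‖ * ‖u‖) * ‖v‖ := by gcongr; exact T.le_opNorm u
      _ = ‖T‖ * (‖u‖ * ‖v‖) := by ring
      _ ≤ _ := by
        gcongr
        nlinarith [sq_nonneg (‖u‖ - ‖v‖)]
  refine (Finset.sum_le_sum fun n _ => t n).trans ?_
  rw [← Finset.mul_sum, ← Finset.sum_div, Finset.sum_add_distrib]
  have s1 := aux_sum_le P hsa hidem h2 N x
  have s2 := aux_sum_le (fun n => P (n + 1)) (fun n => hsa _) (fun n => hidem _)
    (fun n => h2 _) N y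
  simp only [hx, hy] at s1 s2
  have := norm_nonneg T
  refine mul_le_of_le_one_right this ?_
  linarith

include hP0 hsa hidem h1 h2 in
lemma aux_half (T : H →L[ℂ] H)
    (hT : ∀ n : ℕ, 1 ≤ n → ‖(1 - P (n + 1)) * (T * P n)‖ ≤ ((2 : ℝ) ^ n)⁻¹) (N : ℕ) :
    ‖∑ n ∈ Finset.range N, (1 - P n) * (T * P n)‖ ≤ 4 + ‖T‖ := by
  cases N with
  | zero => simp; positivity
  | succ N =>
  rw [Finset.sum_range_succ']
  simp only [hP0, mul_zero, add_zero]
  have key : ∀ n, (1 - P (n+1)) * (T * P (n+1)) =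
      ((1 - P (n + 2)) * (T * P (n + 1)) + (P (n + 2) - P (n + 1)) * ((1 - P (n + 1)) * (T * P n)))
      + (P (n + 2) - P (n + 1)) * (T * (P (n + 1) - P n)) := by
    intro n
    have e : (P (n + 2) - P (n + 1)) * (1 - P (n + 1)) = P (n + 2) - P (n + 1) := by
      rw [mul_sub, mul_one, sub_mul, h2 (n+1), hidem]; simp
    rw [← mul_assoc (P (n + 2) - P (n + 1)) (1 - P (n + 1)), e]
    noncomm_ring
  rw [Finset.sum_congr rfl fun n _ => key n, Finset.sum_add_distrib]
  refine (norm_add_le _ _).trans (add_le_add ?_ (aux_diag P hsa hidem h2 T N))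
  have b : ∀ n, ‖(1 - P (n + 2)) * (T * P (n + 1)) +
      (P (n + 2) - P (n + 1)) * ((1 - P (n + 1)) * (T * P n))‖ ≤ 2 * (1 / 2 : ℝ) ^ n := by
    intro n
    have b1 := hT (n+1) (by omega)
    have b2 : ‖(P (n + 2) - P (n + 1)) * ((1 - P (n + 1)) * (T * P n))‖ ≤ ((2:ℝ)^n)⁻¹ := by
      rcases Nat.eq_zero_or_pos n with rfl | hn
      · simp [hP0]
      · refine (norm_mul_le _ _).trans ?_
        have := aux_q_le P hsa hidem h2 (n+1)
        have := hT n hn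
        calc _ ≤ 1 * ((2:ℝ)^n)⁻¹ := by gcongr
          _ = _ := one_mul _
    have b3 : ((2:ℝ)^(n+1))⁻¹ ≤ ((2:ℝ)^n)⁻¹ := by
      gcongr <;> norm_num
    refine (norm_add_le _ _).trans ?_
    rw [one_div, inv_pow]
    have b1' : ‖(1 - P (n + 2)) * (T * P (n + 1))‖ ≤ ((2 : ℝ) ^ (n+1))⁻¹ := b1
    linarith
  refine (norm_sum_le _ _).trans ((Finset.sum_le_sum fun n _ => b n).trans ?_)
  rw [← Finset.mul_sum]
  have := sum_geometric_two_le N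
  linarith

include hP0 in
lemma aux_sumQ (N : ℕ) : ∑ a ∈ Finset.Icc 1 N, (P a - P (a - 1)) = P N := by
  induction N with
  | zero => simp [hP0]
  | succ N ih => rw [Finset.sum_Icc_succ_top (by omega), ih]; simp

lemma aux_sumh (N : ℕ) : ∑ a ∈ Finset.Icc 1 N, (a : ℝ) • (P a - P (a - 1))
    = (N : ℝ) • P N - ∑ n ∈ Finset.range N, P n := by
  induction N with
  | zero => simp
  | succ N ih =>
    rw [Finset.sum_Icc_succ_top (by omega), ih, Finset.sum_range_succ]
    simp only [Nat.add_sub_cancel]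
    push_cast
    module

include h1 in
lemma aux_mono1 (n k : ℕ) (hidem : ∀ n : ℕ, P n * P n = P n) : P n * P (n + k) = P n := by
  induction k with
  | zero => exact hidem n
  | succ k ih =>
    calc P n * P (n + (k+1)) = (P n * P (n + k)) * P (n + k + 1) := by rw [ih]; rfl
      _ = P n := by rw [mul_assoc, h1, ih]

include h2 in
lemma aux_mono2 (n k : ℕ) (hidem : ∀ n : ℕ, P n * P n = P n) : P (n + k) * P n = P n := by
  induction k with
  | zero => exact hidem n
  | succ k ih =>
    calc P (n + (k+1)) * P n = P (n + k + 1) * (P (n + k) * P n) := by rw [ih]; rfl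
      _ = P n := by rw [← mul_assoc, h2, ih]

include hP0 h1 h2 hidem in
lemma aux_main_s15 (T : H →L[ℂ] H) (N : ℕ) :
    ∑ a ∈ Finset.Icc 1 N, ∑ b ∈ Finset.Icc 1 N,
        (((b : ℝ) - (a : ℝ)) • ((P a - P (a - 1)) * (T * (P b - P (b - 1)))))
    = P N * (∑ n ∈ Finset.range N, (P n * (T * (1 - P n)) - (1 - P n) * (T * P n))) * P N := by
  have e1 : ∑ a ∈ Finset.Icc 1 N, ∑ b ∈ Finset.Icc 1 N,
        (((b : ℝ) - (a : ℝ)) • ((P a - P (a - 1)) * (T * (P b - P (b - 1)))))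
      = (∑ a ∈ Finset.Icc 1 N, (P a - P (a - 1))) *
          (T * ∑ a ∈ Finset.Icc 1 N, (a : ℝ) • (P a - P (a - 1)))
        - (∑ a ∈ Finset.Icc 1 N, (a : ℝ) • (P a - P (a - 1))) *
          (T * ∑ a ∈ Finset.Icc 1 N, (P a - P (a - 1))) := by
    generalize hQ : (fun a => P a - P (a - 1)) = Q
    have hQ' : ∀ a, P a - P (a - 1) = Q a := fun a => congrFun hQ a
    simp only [hQ', Finset.mul_sum, Finset.sum_mul, sub_smul, Finset.sum_sub_distrib,
      mul_smul_comm, smul_mul_assoc, Finset.smul_sum]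
    congr 1
    all_goals first | rfl | exact Finset.sum_comm
  rw [e1, aux_sumQ P hP0, aux_sumh, Finset.mul_sum, Finset.sum_mul]
  have e2 : ∀ n ∈ Finset.range N,
      P N * (P n * (T * (1 - P n)) - (1 - P n) * (T * P n)) * P N
      = P n * (T * P N) - P N * (T * P n) := by
    intro n hn
    obtain ⟨k, rfl⟩ := Nat.exists_eq_add_of_le (Finset.mem_range.1 hn).le
    have m1 := aux_mono1 P h1 n k hidem
    have m2 := aux_mono2 P h2 n k hidem
    calc _ = (P (n+k) * P n) * T * P (n+k) - P (n+k) * T * (P n * P (n+k)) := by noncomm_ring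
      _ = _ := by rw [m1, m2]; noncomm_ring
  rw [Finset.sum_congr rfl e2, Finset.sum_sub_distrib]
  simp only [mul_sub, sub_mul, Finset.mul_sum, Finset.sum_mul, mul_smul_comm, smul_mul_assoc]
  abel

end aux

/-- Let `(Pₙ)` be an increasing sequence of orthogonal projections on a complex
Hilbert space with `P₀ = 0`, `Qₙ = Pₙ − Pₙ₋₁`, and let `T` be a bounded operator with
`‖(1 − Pₙ₊₁) T Pₙ‖ ≤ 2⁻ⁿ` and `‖(1 − Pₙ₊₁) T* Pₙ‖ ≤ 2⁻ⁿ` for `n ≥ 1`.  Then the partial sums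
`Σ_{a,b=1}^N (b − a) Q_a T Q_b` are uniformly bounded in norm.  (The commutator of `T` with
`h = Σ n Qₙ` is bounded.) -/
theorem statement15 {𝓗 : Type*} [NormedAddCommGroup 𝓗] [InnerProductSpace ℂ 𝓗]
    [CompleteSpace 𝓗]
    (P : ℕ → 𝓗 →L[ℂ] 𝓗) (hP0 : P 0 = 0)
    (hsa : ∀ n : ℕ, IsSelfAdjoint (P n))
    (hidem : ∀ n : ℕ, (P n).comp (P n) = P n)
    (hincr : ∀ n : ℕ, (P n).comp (P (n + 1)) = P n ∧ (P (n + 1)).comp (P n) = P n)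
    (T : 𝓗 →L[ℂ] 𝓗)
    (hT : ∀ n : ℕ, 1 ≤ n →
      ‖((1 : 𝓗 →L[ℂ] 𝓗) - P (n + 1)).comp (T.comp (P n))‖ ≤ ((2 : ℝ) ^ n)⁻¹)
    (hT' : ∀ n : ℕ, 1 ≤ n →
      ‖((1 : 𝓗 →L[ℂ] 𝓗) - P (n + 1)).comp ((ContinuousLinearMap.adjoint T).comp (P n))‖
        ≤ ((2 : ℝ) ^ n)⁻¹) :
    ∃ C : ℝ, ∀ N : ℕ,
      ‖∑ a ∈ Finset.Icc 1 N, ∑ b ∈ Finset.Icc 1 N,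
        (((b : ℝ) - (a : ℝ)) •
          ((P a - P (a - 1)).comp (T.comp (P b - P (b - 1)))))‖ ≤ C := by
  have h1 : ∀ n : ℕ, P n * P (n + 1) = P n := fun n => (hincr n).1
  have h2 : ∀ n : ℕ, P (n + 1) * P n = P n := fun n => (hincr n).2
  have hidem' : ∀ n : ℕ, P n * P n = P n := hidem
  refine ⟨(4 + ‖T‖) + (4 + ‖T‖), fun N => ?_⟩
  have e := aux_main_s15 P hP0 hidem' h1 h2 T N
  refine (congrArg norm e).le.trans ?_
  have hN : ‖P N‖ ≤ 1 := ContinuousLinearMap.opNorm_le_bound _ zero_le_one fun x => by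
    rw [one_mul]; exact aux_le (hsa N) (hidem' N) x
  have hA := aux_half P hP0 hsa hidem' h1 h2 T hT N
  have hB := aux_half P hP0 hsa hidem' h1 h2 (star T) hT' N
  rw [norm_star, ← norm_star, star_sum] at hB
  have e3 : ∀ n, star ((1 - P n) * (star T * P n)) = P n * (T * (1 - P n)) := fun n => by
    simp only [star_mul, star_star, star_sub, star_one, (hsa n).star_eq, mul_assoc]
  simp only [e3] at hB
  rw [Finset.sum_sub_distrib]
  set X := ∑ n ∈ Finset.range N, P n * (T * (1 - P n))
  set Y := ∑ n ∈ Finset.range N, (1 - P n) * (T * P n)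
  calc ‖P N * (X - Y) * P N‖ ≤ ‖P N‖ * ‖X - Y‖ * ‖P N‖ :=
        (norm_mul_le _ _).trans (mul_le_mul_of_nonneg_right (norm_mul_le _ _) (norm_nonneg _))
    _ ≤ 1 * ‖X - Y‖ * 1 := by gcongr
    _ = ‖X - Y‖ := by ring
    _ ≤ ‖X‖ + ‖Y‖ := norm_sub_le _ _
    _ ≤ _ := add_le_add hB hA
end
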